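/- Let P be an n × n column-stochastic real matrix (nonnegative entries, each column summing to 1) in block form P = [[P₁, P₂],[0, P₄]], where P₁ is k × k, P₂ is k × m, the lower-left block is zero, and P₄ is m × m, and suppose every column of P₂ has at least one strictly positive entry. Then for every probability vector π⁰ ∈ ℝⁿ (nonnegative entries summing to 1), the total mass of P^t π⁰ on the last m coordinates tends to 0 as t → ∞; equivalently, lim_{t→∞} Σ_{i=1}^{k} (P^t π⁰)_i = 1. -/

import Mathlib

open Matrix Filter

/-!
Let `P = [[P₁, P₂], [0, P₄]]`. Unit column sums make `P` preserve the total mass, and the zero block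
makes the part of `P ^ t *ᵥ π⁰` outside the first block equal to `P₄ ^ t` applied to the
corresponding part of `π⁰`. A positive entry in each column of `P₂` forces the column sums of `P₄`
below `1`, so `P₄ ^ t → 0` and all the mass ends up in the first block.
-/

section Algebra

variable {α β R : Type*} [Fintype α] [Fintype β] [DecidableEq α] [DecidableEq β] [Semiring R]

theorem vecMul_pow_eq_self {A : Matrix α α R} {u : α → R} (h : u ᵥ* A = u) (t : ℕ) :
    u ᵥ* A ^ t = u := by
  induction t with
  | zero => rw [pow_zero, vecMul_one]
  | succ t ih => rw [pow_succ, ← vecMul_vecMul, ih, h]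

theorem sum_pow_mulVec_of_colSum_eq_one {A : Matrix α α R} (hA : ∀ j, ∑ i, A i j = 1)
    (v : α → R) (t : ℕ) : ∑ i, (A ^ t *ᵥ v) i = ∑ i, v i := by
  have hfix : 1 ᵥ* A = 1 := funext fun j => (one_dotProduct _).trans (hA j)
  rw [← one_dotProduct, dotProduct_mulVec, vecMul_pow_eq_self hfix, one_dotProduct]

theorem fromBlocks_zero₂₁_pow_mulVec_comp_inr (A : Matrix α α R) (B : Matrix α β R)
    (D : Matrix β β R) (v : α ⊕ β → R) (t : ℕ) :
    (fromBlocks A B 0 D ^ t *ᵥ v) ∘ Sum.inr = D ^ t *ᵥ (v ∘ Sum.inr) := by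
  induction t with
  | zero => simp only [pow_zero, one_mulVec]
  | succ t ih =>
    rw [pow_succ', ← mulVec_mulVec, fromBlocks_mulVec, Sum.elim_comp_inr, zero_mulVec, zero_add,
      ih, mulVec_mulVec, ← pow_succ']

end Algebra

theorem sum_norm_inr_lt_sum {α β : Type*} [Fintype α] [Fintype β] {f : α ⊕ β → ℝ}
    (hf : ∀ i, 0 ≤ f i) (hpos : ∃ i, 0 < f (Sum.inl i)) : ∑ j, ‖f (Sum.inr j)‖ < ∑ i, f i := by
  obtain ⟨i, hi⟩ := hpos
  simp only [Real.norm_of_nonneg (hf _), Fintype.sum_sum_type]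
  exact lt_add_of_pos_left _
    (Finset.sum_pos' (fun i _ => hf (Sum.inl i)) ⟨i, Finset.mem_univ i, hi⟩)

section Limits

attribute [local instance] Matrix.linftyOpSemiNormedRing

theorem tendsto_pow_atTop_nhds_zero_of_rowSum_norm_lt_one {β R : Type*} [Fintype β]
    [DecidableEq β] [SeminormedRing R] {A : Matrix β β R} (hA : ∀ i, ∑ j, ‖A i j‖ < 1) :
    Tendsto (fun t : ℕ => A ^ t) atTop (nhds 0) := by
  refine tendsto_pow_atTop_nhds_zero_of_norm_lt_one ?_
  rw [linfty_opNorm_def, ← NNReal.coe_one, NNReal.coe_lt_coe, Finset.sup_lt_iff zero_lt_one]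
  intro i _
  simpa only [← NNReal.coe_lt_coe, NNReal.coe_sum, coe_nnnorm, NNReal.coe_one] using hA i

end Limits

theorem tendsto_pow_atTop_nhds_zero_of_colSum_norm_lt_one {β R : Type*} [Fintype β]
    [DecidableEq β] [SeminormedCommRing R] {A : Matrix β β R} (hA : ∀ j, ∑ i, ‖A i j‖ < 1) :
    Tendsto (fun t : ℕ => A ^ t) atTop (nhds 0) := by
  have htranspose : Tendsto (fun t : ℕ => (Aᵀ ^ t)ᵀ) atTop (nhds 0ᵀ) :=
    (continuous_id.matrix_transpose.tendsto 0).comp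
      (tendsto_pow_atTop_nhds_zero_of_rowSum_norm_lt_one hA)
  simpa only [← transpose_pow, transpose_transpose, transpose_zero] using htranspose

section Mass

variable {α β R : Type*} [Fintype α] [Fintype β] [DecidableEq α] [DecidableEq β]

theorem tendsto_sum_inl_of_tendsto_pow_zero [Ring R] [TopologicalSpace R] [IsTopologicalRing R]
    {A : Matrix α α R} {B : Matrix α β R} {D : Matrix β β R}
    (hcol : ∀ j, ∑ i, fromBlocks A B 0 D i j = 1)
    (hD : Tendsto (fun t : ℕ => D ^ t) atTop (nhds 0)) (v : α ⊕ β → R) :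
    Tendsto (fun t : ℕ => ∑ i, (fromBlocks A B 0 D ^ t *ᵥ v) (Sum.inl i)) atTop
      (nhds (∑ i, v i)) := by
  have hmass (t : ℕ) : ∑ i, (fromBlocks A B 0 D ^ t *ᵥ v) (Sum.inl i)
      = ∑ i, v i - ∑ j, (D ^ t *ᵥ (v ∘ Sum.inr)) j := by
    rw [← sum_pow_mulVec_of_colSum_eq_one hcol v t, Fintype.sum_sum_type,
      ← fromBlocks_zero₂₁_pow_mulVec_comp_inr A B D v t]
    exact (add_sub_cancel_right _ _).symm
  have hcont : Continuous fun M : Matrix β β R => ∑ j, (M *ᵥ (v ∘ Sum.inr)) j := by fun_prop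
  have htail : Tendsto (fun t : ℕ => ∑ j, (D ^ t *ᵥ (v ∘ Sum.inr)) j) atTop (nhds 0) := by
    simpa only [Function.comp_def, zero_mulVec, Pi.zero_apply, Finset.sum_const_zero] using
      (hcont.tendsto 0).comp hD
  simpa only [hmass, sub_zero] using htail.const_sub (∑ i, v i)

theorem block_stochastic_mass_tendsto_one_general [SeminormedCommRing R]
    (P₁ : Matrix α α R) (P₂ : Matrix α β R) (P₄ : Matrix β β R)
    (hcol : ∀ j, ∑ i, fromBlocks P₁ P₂ 0 P₄ i j = 1)
    (hP₄ : ∀ j, ∑ i, ‖P₄ i j‖ < 1) (π0 : α ⊕ β → R) :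
    Tendsto (fun t : ℕ => ∑ i, (fromBlocks P₁ P₂ 0 P₄ ^ t *ᵥ π0) (Sum.inl i)) atTop
      (nhds (∑ i, π0 i)) :=
  tendsto_sum_inl_of_tendsto_pow_zero hcol
    (tendsto_pow_atTop_nhds_zero_of_colSum_norm_lt_one hP₄) π0

end Mass

/-- For a column-stochastic matrix in block form `[[P₁, P₂],[0, P₄]]` in
which every column of `P₂` has a strictly positive entry, and any probability vector
`π⁰`, the total mass of `P^t π⁰` on the first `k` coordinates tends to 1. -/
theorem block_stochastic_mass_tendsto_one {k m : ℕ}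
    (P₁ : Matrix (Fin k) (Fin k) ℝ) (P₂ : Matrix (Fin k) (Fin m) ℝ)
    (P₄ : Matrix (Fin m) (Fin m) ℝ)
    (hnn : ∀ i j, 0 ≤ Matrix.fromBlocks P₁ P₂ 0 P₄ i j)
    (hcol : ∀ j, ∑ i, Matrix.fromBlocks P₁ P₂ 0 P₄ i j = 1)
    (hP₂ : ∀ j : Fin m, ∃ i : Fin k, 0 < P₂ i j)
    (π0 : Fin k ⊕ Fin m → ℝ) (hπ0nn : ∀ i, 0 ≤ π0 i) (hπ0sum : ∑ i, π0 i = 1) :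
    Tendsto
      (fun t => ∑ i : Fin k, (((Matrix.fromBlocks P₁ P₂ 0 P₄) ^ t) *ᵥ π0) (Sum.inl i))
      atTop (nhds 1) := by
  rw [← hπ0sum]
  exact block_stochastic_mass_tendsto_one_general P₁ P₂ P₄ hcol (fun j =>
    (sum_norm_inr_lt_sum (hnn · (Sum.inr j)) (hP₂ j)).trans_eq (hcol (Sum.inr j))) π0
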